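/- Let X = {x_0, …, x_M} be M+1 distinct real points, u a positive function on X, P_0,…,P_M the orthogonal polynomials for u with squared norms p_i, and for 1 ≤ m ≤ M let K_u^{(m)}(x,y) = √(u(x)u(y))·∑_{i=0}^{m−1} P_i(x)P_i(y)/p_i. Let 𝒬̄_u^{(m)} be the probability measure on (M+1−m)-element subsets of X defined by 𝒬̄_u^{(m)}(B) = 𝒫_u^{(m)}(X ∖ B). Then for every n and every n-element subset {x_{i_1},…,x_{i_n}} ⊆ X, ρ_n({x_{i_1},…,x_{i_n}} | 𝒬̄_u^{(m)}) = det[δ_{x_{i_k} x_{i_l}} − K_u^{(m)}(x_{i_k}, x_{i_l})]_{k,l=1,…,n}, where δ is the Kronecker delta. -/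

import Mathlib

/-!
Put `Φ i k = P_i(x_k) √u(x_k) / √p_i` for `i < m`. Orthogonality says that the rows of `Φ` are
orthonormal, and `K_u^{(m)} = Φᵀ Φ`. Passing from the `P_i` to monomials by a triangular change of
basis turns an `m × m` minor of `Φ` with column set `C` into a Vandermonde determinant, so the
square of that minor is `c · W(C)`, where `W` is the unnormalized weight and `c = ∏ lc(P_i)² / p_i`
(`sq_det_minor`).

The Cauchy–Binet formula (`sum_minors`) gives `∑_{C ⊆ S, |C| = m} c W(C) = det (Φ_S Φ_Sᵀ)` for every
set `S` of columns. For `S = X` the right side is `det 1 = 1`, so `c Z = 1`. The correlation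
function at `A` is the total mass of the `C` avoiding `A`, that is
`det (Φ_{Aᶜ} Φ_{Aᶜ}ᵀ) = det (1 - Φ_A Φ_Aᵀ)`, and this equals `det (1 - Φ_Aᵀ Φ_A)` by the
Weinstein–Aronszajn identity.
-/

open Finset

/-- The unnormalized weight of a subset `A`:
`∏_{pairs {a,b} ⊆ A}(x_a - x_b)² · ∏_{a ∈ A} w(a)`. -/
noncomputable def ensembleWeight {M : ℕ} (x w : Fin (M + 1) → ℝ)
    (A : Finset (Fin (M + 1))) : ℝ :=
  (∏ a ∈ A, ∏ b ∈ A.filter (fun b => b < a), (x a - x b) ^ 2) * ∏ a ∈ A, w a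

/-- The discrete orthogonal polynomial ensemble `𝒫_w^{(m)}`. -/
noncomputable def ensembleMeasure {M : ℕ} (x w : Fin (M + 1) → ℝ) (m : ℕ)
    (A : Finset (Fin (M + 1))) : ℝ :=
  if A.card = m then
    ensembleWeight x w A / ∑ B ∈ Finset.univ.powersetCard m, ensembleWeight x w B
  else 0

/-- The `n`-th correlation function `ρ_n(A | μ) = ∑_{B ⊇ A} μ(B)`. -/
noncomputable def correlation {M : ℕ} (μ : Finset (Fin (M + 1)) → ℝ)
    (A : Finset (Fin (M + 1))) : ℝ :=
  ∑ B ∈ Finset.univ.powerset.filter (fun B => A ⊆ B), μ B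

/-- The Christoffel–Darboux kernel
`K_u^{(m)}(x_k, x_l) = √(u(x_k) u(x_l)) ∑_{i=0}^{m-1} P_i(x_k) P_i(x_l)/p_i`. -/
noncomputable def cdKernel {M : ℕ} (x w : Fin (M + 1) → ℝ)
    (P : Fin (M + 1) → Polynomial ℝ) (p : Fin (M + 1) → ℝ) (m : ℕ)
    (k l : Fin (M + 1)) : ℝ :=
  Real.sqrt (w k * w l) *
    ∑ i ∈ Finset.univ.filter (fun i : Fin (M + 1) => (i : ℕ) < m),
      (P i).eval (x k) * (P i).eval (x l) / p i

/-- The injective maps `Fin m → ι` with image `C` are the permutations of the increasing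
enumeration of `C`. -/
lemma sum_injective_image_eq {ι : Type*} [Fintype ι] [LinearOrder ι] {m : ℕ} (C : Finset ι)
    (hC : C.card = m) (h : (Fin m → ι) → ℝ) :
    ∑ f : Fin m → ι with Function.Injective f ∧ univ.image f = C, h f
      = ∑ σ : Equiv.Perm (Fin m), h (C.orderEmbOfFin hC ∘ σ) := by
  symm
  refine Finset.sum_bij (fun σ _ => C.orderEmbOfFin hC ∘ σ) ?_ ?_ ?_ (fun _ _ => rfl)
  · intro σ _
    simp only [mem_filter, mem_univ, true_and]
    refine ⟨(C.orderEmbOfFin hC).injective.comp σ.injective, ?_⟩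
    rw [← Finset.image_image, Finset.image_univ_equiv]
    exact Finset.image_orderEmbOfFin_univ C hC
  · intro σ _ τ _ hστ
    ext i
    exact congrArg _ ((C.orderEmbOfFin hC).injective (congrFun hστ i))
  · intro f hf
    simp only [mem_filter, mem_univ, true_and] at hf
    obtain ⟨hinj, him⟩ := hf
    have hmem : ∀ i, ∃ j, C.orderEmbOfFin hC j = f i := fun i => by
      have : f i ∈ Set.range (C.orderEmbOfFin hC) := by
        rw [Finset.range_orderEmbOfFin, ← him]
        simp
      exact this
    choose g hg using hmem
    have hginj : Function.Injective g := fun a b hab => hinj (by rw [← hg a, ← hg b, hab])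
    exact ⟨Equiv.ofBijective g (Finite.injective_iff_bijective.mp hginj), mem_univ _,
      funext hg⟩

/-- Cauchy–Binet for `Φ_S Φ_Sᵀ`, where `g C` is the square of the maximal minor with columns `C`. -/
lemma sum_minors {ι : Type*} [Fintype ι] [LinearOrder ι] {m : ℕ} (Φ : Matrix (Fin m) ι ℝ)
    (g : Finset ι → ℝ)
    (hg : ∀ C (hC : C.card = m), (Φ.submatrix id (C.orderEmbOfFin hC)).det ^ 2 = g C)
    (S : Finset ι) :
    ∑ C ∈ S.powersetCard m, g C
      = (Matrix.of fun i j : Fin m => ∑ k ∈ S, Φ i k * Φ j k).det := by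
  have expand : (Matrix.of fun i j : Fin m => ∑ k ∈ S, Φ i k * Φ j k).det
      = ∑ f ∈ Fintype.piFinset (fun _ : Fin m => S),
          (∏ i, Φ i (f i)) * (Φ.submatrix id f).det := by
    simp only [Matrix.det_apply', Matrix.of_apply, prod_univ_sum, mul_sum, Matrix.submatrix_apply,
      id]
    rw [Finset.sum_comm]
    refine sum_congr rfl fun f _ => sum_congr rfl fun σ _ => ?_
    rw [prod_mul_distrib]
    ring
  -- A non-injective `f` repeats a column.
  have restrict : ∑ f ∈ Fintype.piFinset (fun _ : Fin m => S),
          (∏ i, Φ i (f i)) * (Φ.submatrix id f).det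
      = ∑ f ∈ Fintype.piFinset (fun _ : Fin m => S) with Function.Injective f,
          (∏ i, Φ i (f i)) * (Φ.submatrix id f).det := by
    symm
    refine sum_subset (filter_subset _ _) fun f hf hf' => ?_
    have hni : ¬ Function.Injective f := fun h => hf' (mem_filter.2 ⟨hf, h⟩)
    simp only [Function.Injective, not_forall] at hni
    obtain ⟨a, b, hab, hne⟩ := hni
    rw [Matrix.det_zero_of_column_eq hne (fun k => by simp [hab]), mul_zero]
  have maps : ∀ f ∈ (Fintype.piFinset (fun _ : Fin m => S)).filter Function.Injective,
      univ.image f ∈ S.powersetCard m := by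
    intro f hf
    rw [mem_filter, Fintype.mem_piFinset] at hf
    rw [mem_powersetCard]
    refine ⟨fun y hy => ?_, by rw [card_image_of_injective _ hf.2]; simp⟩
    obtain ⟨i, -, rfl⟩ := mem_image.1 hy
    exact hf.1 i
  rw [expand, restrict, ← sum_fiberwise_of_maps_to maps]
  refine sum_congr rfl fun C hC => ?_
  obtain ⟨hCS, hCm⟩ := mem_powersetCard.1 hC
  have fiber : ((Fintype.piFinset (fun _ : Fin m => S)).filter Function.Injective).filter
        (fun f => univ.image f = C)
      = univ.filter (fun f : Fin m → ι => Function.Injective f ∧ univ.image f = C) := by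
    ext f
    simp only [mem_filter, Fintype.mem_piFinset, mem_univ, true_and, and_assoc]
    refine ⟨fun h => h.2, fun h => ⟨fun i => hCS ?_, h⟩⟩
    rw [← h.2]
    simp
  rw [fiber, sum_injective_image_eq C hCm, ← hg C hCm, sq]
  set e := C.orderEmbOfFin hCm
  have perm : ∀ σ : Equiv.Perm (Fin m), (Φ.submatrix id (e ∘ σ)).det
      = Equiv.Perm.sign σ * (Φ.submatrix id e).det := fun σ => by
    rw [← Matrix.det_permute' σ, Matrix.submatrix_submatrix]
    rfl
  simp only [perm]
  nth_rw 1 [← Matrix.det_transpose]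
  rw [Matrix.det_apply', sum_mul]
  refine sum_congr rfl fun σ _ => ?_
  simp only [Matrix.transpose_apply, Matrix.submatrix_apply, id, Function.comp]
  ring

lemma ensembleWeight_eq_vandermonde {M m : ℕ} (x u : Fin (M + 1) → ℝ)
    (C : Finset (Fin (M + 1))) (hC : C.card = m) :
    ensembleWeight x u C
      = (Matrix.vandermonde (x ∘ C.orderEmbOfFin hC)).det ^ 2
          * ∏ i, u (C.orderEmbOfFin hC i) := by
  set e := C.orderEmbOfFin hC with he
  have hCe : C = univ.map e.toEmbedding := (Finset.map_orderEmbOfFin_univ C hC).symm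
  have pairs : ∀ a : Fin m, C.filter (fun b => b < e a)
      = (univ.filter (fun b : Fin m => b < a)).map e.toEmbedding := fun a => by
    conv_lhs => rw [hCe]
    rw [filter_map]
    congr 1
    ext b
    simp
  have outer : ∀ F : Fin (M + 1) → ℝ, ∏ a ∈ C, F a = ∏ i, F (e i) := fun F => by
    conv_lhs => rw [hCe]
    rw [prod_map]
    rfl
  unfold ensembleWeight
  rw [outer, outer, Matrix.det_vandermonde, ← prod_pow]
  congr 1
  simp only [pairs, prod_map, ← prod_pow]
  rw [Finset.prod_comm' (t' := univ) (s' := fun b => Ioi b) (by simp)]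
  rfl

/-- The orthonormal functions `P_i √u / √p_i`, `i < m`, as the rows of an `m × (M + 1)` matrix. -/
noncomputable def orthoMatrix {M m : ℕ} (hm : m ≤ M + 1) (x u : Fin (M + 1) → ℝ)
    (P : Fin (M + 1) → Polynomial ℝ) (p : Fin (M + 1) → ℝ) :
    Matrix (Fin m) (Fin (M + 1)) ℝ :=
  Matrix.of fun i k =>
    (P (Fin.castLE hm i)).eval (x k) * Real.sqrt (u k) / Real.sqrt (p (Fin.castLE hm i))

/-- The constant `∏_{i < m} lc(P_i)² / p_i` relating squared minors to ensemble weights; it turns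
out to be the inverse of the partition function. -/
noncomputable def minorConst {M m : ℕ} (hm : m ≤ M + 1)
    (P : Fin (M + 1) → Polynomial ℝ) (p : Fin (M + 1) → ℝ) : ℝ :=
  ∏ i : Fin m, (P (Fin.castLE hm i)).leadingCoeff ^ 2 / p (Fin.castLE hm i)

/-- Only the leading coefficients of the `P_i` matter for the minors, by triangularity. -/
lemma det_eval_eq_vandermonde {m : ℕ} (v : Fin m → ℝ) (P : Fin m → Polynomial ℝ)
    (hP : ∀ i, (P i).degree = (i : ℕ)) :
    (Matrix.of fun i j : Fin m => (P i).eval (v j)).det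
      = (∏ i, (P i).leadingCoeff) * (Matrix.vandermonde v).det := by
  have hne : ∀ i, P i ≠ 0 := fun i h => by simpa [h] using hP i
  have hlc : ∀ i, (P i).leadingCoeff ≠ 0 := fun i => Polynomial.leadingCoeff_ne_zero.2 (hne i)
  rw [Matrix.det_eval_matrixOfPolynomials_eq_det_vandermonde v
    (fun i => P i * Polynomial.C (P i).leadingCoeff⁻¹)
    (fun i => by
      rw [Polynomial.natDegree_mul_C (inv_ne_zero (hlc i))]
      exact Polynomial.natDegree_eq_of_degree_eq_some (hP i))
    (fun i => Polynomial.monic_mul_leadingCoeff_inv (hne i)), ← Matrix.det_transpose,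
    ← Matrix.det_mul_row]
  congr 1
  ext i j
  have := hlc j
  simp only [Matrix.transpose_apply, Matrix.of_apply, Polynomial.eval_mul, Polynomial.eval_C]
  field_simp

lemma sq_det_minor {M m : ℕ} (hm : m ≤ M + 1) (x u : Fin (M + 1) → ℝ) (hu : ∀ k, 0 < u k)
    (P : Fin (M + 1) → Polynomial ℝ) (p : Fin (M + 1) → ℝ)
    (hPdeg : ∀ i, (P i).degree = (i : ℕ)) (hp : ∀ i, 0 < p i)
    (C : Finset (Fin (M + 1))) (hC : C.card = m) :
    ((orthoMatrix hm x u P p).submatrix id (C.orderEmbOfFin hC)).det ^ 2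
      = minorConst hm P p * ensembleWeight x u C := by
  rw [ensembleWeight_eq_vandermonde x u C hC]
  set e := C.orderEmbOfFin hC
  have factor : (orthoMatrix hm x u P p).submatrix id e
      = Matrix.of fun i j => (Real.sqrt (p (Fin.castLE hm i)))⁻¹ *
          (Matrix.of fun i j => Real.sqrt (u (e j)) *
            (Matrix.of fun i j : Fin m => (P (Fin.castLE hm i)).eval ((x ∘ e) j)) i j) i j := by
    ext i j
    simp only [orthoMatrix, Matrix.submatrix_apply, Matrix.of_apply, id, Function.comp]
    ring
  rw [factor, Matrix.det_mul_column, Matrix.det_mul_row,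
    det_eval_eq_vandermonde (x ∘ e) (fun i => P (Fin.castLE hm i)) (fun i => by simp [hPdeg])]
  simp only [mul_pow, ← prod_pow, inv_pow, minorConst, div_eq_mul_inv, prod_mul_distrib]
  simp only [Real.sq_sqrt (hp _).le, Real.sq_sqrt (hu _).le]
  ring

lemma orthoMatrix_rows {M m : ℕ} (hm : m ≤ M + 1) (x u : Fin (M + 1) → ℝ) (hu : ∀ k, 0 < u k)
    (P : Fin (M + 1) → Polynomial ℝ) (p : Fin (M + 1) → ℝ) (hp : ∀ i, 0 < p i)
    (hPorth : ∀ i j, ∑ k, (P i).eval (x k) * (P j).eval (x k) * u k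
        = if i = j then p i else 0) (i j : Fin m) :
    ∑ k, orthoMatrix hm x u P p i k * orthoMatrix hm x u P p j k = if i = j then 1 else 0 := by
  set a := Fin.castLE hm i with ha
  set b := Fin.castLE hm j with hb
  have hterm : ∀ k, orthoMatrix hm x u P p i k * orthoMatrix hm x u P p j k
      = (P a).eval (x k) * (P b).eval (x k) * u k / (Real.sqrt (p a) * Real.sqrt (p b)) := by
    intro k
    have := Real.mul_self_sqrt (hu k).le
    simp only [orthoMatrix, Matrix.of_apply, ← ha, ← hb]
    rw [div_mul_div_comm]
    congr 1
    linear_combination (P a).eval (x k) * (P b).eval (x k) * this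
  simp only [hterm]
  rw [← sum_div, hPorth]
  by_cases hij : i = j
  · have hab : a = b := by rw [ha, hb, hij]
    rw [if_pos hij, if_pos hab, ← hab, Real.mul_self_sqrt (hp a).le, div_self (hp a).ne']
  · have hab : a ≠ b := fun h => hij (Fin.castLE_injective hm h)
    rw [if_neg hij, if_neg hab, zero_div]

lemma orthoMatrix_columns {M m : ℕ} (hm : m ≤ M + 1) (x u : Fin (M + 1) → ℝ)
    (hu : ∀ k, 0 < u k) (P : Fin (M + 1) → Polynomial ℝ) (p : Fin (M + 1) → ℝ)
    (hp : ∀ i, 0 < p i) (k l : Fin (M + 1)) :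
    ∑ i, orthoMatrix hm x u P p i k * orthoMatrix hm x u P p i l = cdKernel x u P p m k l := by
  have hrange : univ.filter (fun i : Fin (M + 1) => (i : ℕ) < m)
      = univ.map (Fin.castLEEmb hm) := by
    ext i
    simp only [mem_filter, mem_univ, true_and, mem_map]
    exact ⟨fun h => ⟨⟨i, h⟩, rfl⟩, fun ⟨a, h⟩ => by rw [← h]; exact a.2⟩
  unfold cdKernel
  rw [hrange, sum_map, mul_sum, Real.sqrt_mul (hu k).le]
  refine sum_congr rfl fun i _ => ?_
  have := Real.mul_self_sqrt (hp (Fin.castLE hm i)).le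
  simp only [orthoMatrix, Matrix.of_apply, Fin.castLEEmb_apply]
  rw [div_mul_div_comm, this]
  ring

lemma correlation_complement {M : ℕ} (x u : Fin (M + 1) → ℝ) (m : ℕ)
    (A : Finset (Fin (M + 1))) :
    correlation (fun B => ensembleMeasure x u m Bᶜ) A
      = (∑ C ∈ Aᶜ.powersetCard m, ensembleWeight x u C)
          / ∑ B ∈ Finset.univ.powersetCard m, ensembleWeight x u B := by
  unfold correlation ensembleMeasure
  rw [← sum_filter, sum_div]
  refine sum_nbij' (fun B => Bᶜ) (fun C => Cᶜ) ?_ ?_ (by simp) (by simp) (by simp)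
  · intro B hB
    simp only [mem_filter, mem_powerset, subset_univ, true_and] at hB
    exact mem_powersetCard.2 ⟨compl_subset_compl.2 hB.1, hB.2⟩
  · intro C hC
    obtain ⟨h1, h2⟩ := mem_powersetCard.1 hC
    simp only [mem_filter, mem_powerset, subset_univ, true_and, compl_compl]
    exact ⟨by rwa [Finset.subset_compl_comm], h2⟩

/-- (Borodin, Proposition 4.) The correlation functions of the complementary
measure `𝒬̄_u^{(m)}(B) = 𝒫_u^{(m)}(X ∖ B)` are determinants of
`δ_{xy} - K_u^{(m)}(x,y)`. -/
theorem complement_ensemble_correlation_det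
    (M : ℕ) (x : Fin (M + 1) → ℝ) (hx : Function.Injective x)
    (u : Fin (M + 1) → ℝ) (hu : ∀ k, 0 < u k)
    (P : Fin (M + 1) → Polynomial ℝ) (p : Fin (M + 1) → ℝ)
    (hPdeg : ∀ i, (P i).degree = (i : ℕ))
    (hp : ∀ i, 0 < p i)
    (hPorth : ∀ i j, ∑ k, (P i).eval (x k) * (P j).eval (x k) * u k
        = if i = j then p i else 0)
    (m : ℕ) (hm1 : 1 ≤ m) (hmM : m ≤ M)
    (Qbar : Finset (Fin (M + 1)) → ℝ)
    (hQbar : ∀ B, Qbar B = ensembleMeasure x u m Bᶜ)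
    (n : ℕ) (A : Finset (Fin (M + 1))) (hA : A.card = n) :
    correlation Qbar A
      = Matrix.det (Matrix.of fun k l : A =>
          (if (k : Fin (M + 1)) = l then (1 : ℝ) else 0) - cdKernel x u P p m k l) := by
  have hm : m ≤ M + 1 := hmM.trans (Nat.le_succ M)
  obtain rfl : Qbar = fun B => ensembleMeasure x u m Bᶜ := funext hQbar
  set Φ := orthoMatrix hm x u P p with hΦ
  set c := minorConst hm P p with hc
  have cauchyBinet : ∀ S : Finset (Fin (M + 1)),
      c * ∑ C ∈ S.powersetCard m, ensembleWeight x u C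
        = (Matrix.of fun i j : Fin m => ∑ k ∈ S, Φ i k * Φ j k).det := fun S => by
    rw [mul_sum]
    exact sum_minors Φ _ (sq_det_minor hm x u hu P p hPdeg hp) S
  have hrows := orthoMatrix_rows hm x u hu P p hp hPorth
  have hZ : c * ∑ C ∈ Finset.univ.powersetCard m, ensembleWeight x u C = 1 := by
    rw [cauchyBinet, ← Matrix.det_one (n := Fin m) (R := ℝ)]
    congr 1
    ext i j
    rw [Matrix.of_apply, hrows, Matrix.one_apply]
  have hc0 : c ≠ 0 := left_ne_zero_of_mul_eq_one hZ
  rw [correlation_complement, ← mul_div_mul_left _ _ hc0, hZ, div_one, cauchyBinet]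
  let ΦA : Matrix (Fin m) A ℝ := Φ.submatrix id Subtype.val
  have hcompl : (Matrix.of fun i j : Fin m => ∑ k ∈ Aᶜ, Φ i k * Φ j k)
      = 1 - ΦA * ΦA.transpose := by
    ext i j
    have hA : (ΦA * ΦA.transpose) i j = ∑ k ∈ A, Φ i k * Φ j k :=
      Finset.sum_coe_sort A (fun k => Φ i k * Φ j k)
    rw [Matrix.sub_apply, hA, Matrix.one_apply, ← hrows i j, Matrix.of_apply,
      ← Finset.sum_add_sum_compl A, add_sub_cancel_left]
  rw [hcompl, Matrix.det_one_sub_mul_comm]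
  congr 1
  ext k l
  rw [Matrix.sub_apply, Matrix.one_apply, Matrix.of_apply,
    ← orthoMatrix_columns hm x u hu P p hp]
  simp only [Subtype.ext_iff]
  rfl
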